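/- (Average gradient rate.) Assume moreover that ∫ e^{−V(x)} dx = 1, let h > 0, let M = L + 1/ε² + 3√(h n)/ε³ + √n/ε² + n√h/ε³, and let γ ∈ (0, 2/M), so that c_γ := γ(1 − γM/2) > 0. Let X₀ ∈ (ℝ^d)^n and define iterates X_{l+1} by x_{l+1,j} = x_{l,j} − γ G_j(X_l). If m₂(X_l) = (1/n)Σ_j‖x_{l,j}‖² ≤ h for all 0 ≤ l ≤ L−1, then (1/L) Σ_{l=0}^{L−1} (1/n) Σ_{j=1}^n ‖G_j(X_l)‖² ≤ F(X₀)/(c_γ L). -/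

import Mathlib

/-!
The mollified entropy satisfies a descent lemma whose constant depends only on the base point `X`,
which is why no bound on the last iterate is needed. Write `S = ∑ i, k_ε(· - X i)` and let `m` be
the posterior mean of the center under the mixture `S`.

* Majorization. If the centers are moved by `u`, the log-sum inequality bounds the new negative
  entropy by a cross entropy in which the posterior weights are those of the old configuration
  (`integral_mixSum_log_le`). Since `log S + ‖·‖² / (2ε²)` is convex with gradient `m / ε²`
  (`log_mixSum_add_le`), the increase of `∫ S log S` is at most
  `∑ j, ∫ k_ε(y - X j) ⟪m(y + u j) - X j, u j⟫ / ε² dy`.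
* Comparison with the gradient. With `m(y)` in place of `m(y + u j)` this is exactly the pairing of
  `u` with the entropic part of the particle gradient (`inner_entropyGrad`). The error is at most
  `R ‖u j‖² / ε³`, where `R = sup ‖X i‖`: the function `m` is bounded by `R`, and translating a
  Gaussian by `u` costs at most `‖u‖ / ε` in `L¹` (`integral_kG_shift_sub_le`).
* The potential energy is `L`-smooth in each center (`integral_kG_potential_le`).

The bound on second moments gives `R ≤ √(h n)`, so `mollF` obeys a descent inequality with constant
`L + 2√(h n)/ε³ ≤ M` (`mollF_add_le`). Summing over the iterations and using that `mollF` is a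
relative entropy, hence nonnegative (`mollF_nonneg`), gives the rate.
-/

open MeasureTheory Real

/-- The normalized Gaussian kernel on `ℝ^d` with covariance `ε² I_d`. -/
noncomputable def kG (d : ℕ) (ε : ℝ) (x : EuclideanSpace ℝ (Fin d)) : ℝ :=
  (2 * π * ε ^ 2) ^ (-(d : ℝ) / 2) * Real.exp (-‖x‖ ^ 2 / (2 * ε ^ 2))

/-- Gradient of the Gaussian kernel: `∇k_ε(x) = -(x/ε²) k_ε(x)`. -/
noncomputable def nablaKG (d : ℕ) (ε : ℝ) (x : EuclideanSpace ℝ (Fin d)) :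
    EuclideanSpace ℝ (Fin d) :=
  (-(1 / ε ^ 2) * kG d ε x) • x

/-- The equal-weight Gaussian mixture density with components centered at `X`. -/
noncomputable def qMix (d n : ℕ) (ε : ℝ) (X : Fin n → EuclideanSpace ℝ (Fin d))
    (θ : EuclideanSpace ℝ (Fin d)) : ℝ :=
  (1 / n : ℝ) * ∑ i, kG d ε (θ - X i)

/-- The mollified relative entropy `F(X) = ∫ V q_X + ∫ q_X log q_X`. -/
noncomputable def mollF (d n : ℕ) (ε : ℝ) (V : EuclideanSpace ℝ (Fin d) → ℝ)
    (X : Fin n → EuclideanSpace ℝ (Fin d)) : ℝ :=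
  (∫ θ, V θ * qMix d n ε X θ) + ∫ θ, qMix d n ε X θ * Real.log (qMix d n ε X θ)

/-- The particle gradient `G_j(X)`. -/
noncomputable def particleGrad (d n : ℕ) (ε : ℝ)
    (gradV : EuclideanSpace ℝ (Fin d) → EuclideanSpace ℝ (Fin d))
    (X : Fin n → EuclideanSpace ℝ (Fin d)) (j : Fin n) : EuclideanSpace ℝ (Fin d) :=
  (∫ y, kG d ε (y - X j) • gradV y) +
    ∫ y, ((∑ i, kG d ε (y - X i))⁻¹ * kG d ε (y - X j)) • (∑ i, nablaKG d ε (y - X i))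

/-! ### Functions of quadratic growth and the Gaussian kernel -/

/-- Continuity together with at most quadratic growth; such functions are integrable against
every translate of the Gaussian kernel. -/
def QuadGrowth {d : ℕ} {F : Type*} [NormedAddCommGroup F]
    (f : EuclideanSpace ℝ (Fin d) → F) : Prop :=
  Continuous f ∧ ∃ C : ℝ, ∀ y, ‖f y‖ ≤ C * (1 + ‖y‖ ^ 2)

namespace QuadGrowth

variable {d : ℕ} {F : Type*} [NormedAddCommGroup F] {f g : EuclideanSpace ℝ (Fin d) → F}

lemma exists_nonneg (hf : QuadGrowth f) : ∃ C : ℝ, 0 ≤ C ∧ ∀ y, ‖f y‖ ≤ C * (1 + ‖y‖ ^ 2) := by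
  obtain ⟨-, C, hC⟩ := hf
  exact ⟨|C|, abs_nonneg C, fun y => (hC y).trans
    (mul_le_mul_of_nonneg_right (le_abs_self C) (by positivity))⟩

lemma add (hf : QuadGrowth f) (hg : QuadGrowth g) : QuadGrowth (fun y => f y + g y) := by
  obtain ⟨cf, C, hC⟩ := hf
  obtain ⟨cg, D, hD⟩ := hg
  refine ⟨cf.add cg, C + D, fun y => (norm_add_le _ _).trans ?_⟩
  linarith [hC y, hD y]

lemma neg (hf : QuadGrowth f) : QuadGrowth (fun y => -f y) := by
  obtain ⟨cf, C, hC⟩ := hf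
  exact ⟨cf.neg, C, fun y => by rw [norm_neg]; exact hC y⟩

lemma sub (hf : QuadGrowth f) (hg : QuadGrowth g) : QuadGrowth (fun y => f y - g y) := by
  simpa only [sub_eq_add_neg] using hf.add hg.neg

lemma const (c : F) : QuadGrowth (fun _ : EuclideanSpace ℝ (Fin d) => c) :=
  ⟨continuous_const, ‖c‖, fun y => by
    nlinarith [norm_nonneg c, mul_nonneg (norm_nonneg c) (sq_nonneg ‖y‖)]⟩

lemma id : QuadGrowth (fun y : EuclideanSpace ℝ (Fin d) => y) :=
  ⟨continuous_id, 1, fun y => by nlinarith [sq_nonneg (‖y‖ - 1), sq_nonneg ‖y‖]⟩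

lemma normSq : QuadGrowth (fun y : EuclideanSpace ℝ (Fin d) => ‖y‖ ^ 2) :=
  ⟨by fun_prop, 1, fun y => by rw [Real.norm_of_nonneg (by positivity)]; linarith⟩

lemma shift (hf : QuadGrowth f) (a : EuclideanSpace ℝ (Fin d)) :
    QuadGrowth (fun y => f (y + a)) := by
  obtain ⟨C, hC0, hC⟩ := hf.exists_nonneg
  refine ⟨hf.1.comp (by fun_prop), C * (2 + 2 * ‖a‖ ^ 2), fun y => (hC _).trans ?_⟩
  rw [mul_assoc]
  refine mul_le_mul_of_nonneg_left ?_ hC0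
  have h1 := norm_add_le y a
  have h2 : ‖y + a‖ ^ 2 ≤ (‖y‖ + ‖a‖) ^ 2 := by gcongr
  nlinarith [sq_nonneg (‖y‖ - ‖a‖), mul_nonneg (sq_nonneg ‖y‖) (sq_nonneg ‖a‖)]

lemma inner_const {f : EuclideanSpace ℝ (Fin d) → EuclideanSpace ℝ (Fin d)} (hf : QuadGrowth f)
    (u : EuclideanSpace ℝ (Fin d)) : QuadGrowth (fun y => inner ℝ (f y) u) := by
  obtain ⟨cf, C, hC⟩ := hf
  refine ⟨by fun_prop, C * ‖u‖, fun y => (norm_inner_le_norm _ _).trans ?_⟩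
  nlinarith [mul_le_mul_of_nonneg_right (hC y) (norm_nonneg u)]

lemma const_mul {f : EuclideanSpace ℝ (Fin d) → ℝ} (hf : QuadGrowth f) (c : ℝ) :
    QuadGrowth (fun y => c * f y) := by
  obtain ⟨cf, C, hC⟩ := hf
  refine ⟨by fun_prop, |c| * C, fun y => ?_⟩
  rw [norm_mul, Real.norm_eq_abs c, mul_assoc]
  exact mul_le_mul_of_nonneg_left (hC y) (abs_nonneg c)

end QuadGrowth

section kernel

variable {d : ℕ} {ε : ℝ}

lemma kG_pos (hε : 0 < ε) (x : EuclideanSpace ℝ (Fin d)) : 0 < kG d ε x := by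
  unfold kG; positivity

lemma kG_continuous : Continuous (kG d ε) := by
  unfold kG; fun_prop

lemma integrable_exp_neg_mul_normSq {b : ℝ} (hb : 0 < b) :
    Integrable (fun y : EuclideanSpace ℝ (Fin d) => Real.exp (-b * ‖y‖ ^ 2)) := by
  refine Integrable.of_integral_ne_zero ?_
  rw [GaussianFourier.integral_rexp_neg_mul_sq_norm hb]
  positivity

lemma kG_eq (x : EuclideanSpace ℝ (Fin d)) :
    kG d ε x = (2 * π * ε ^ 2) ^ (-(d : ℝ) / 2) * Real.exp (-(1 / (2 * ε ^ 2)) * ‖x‖ ^ 2) := by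
  unfold kG
  congr 2
  ring

lemma integral_kG (hε : 0 < ε) (x : EuclideanSpace ℝ (Fin d)) : ∫ y, kG d ε (y - x) = 1 := by
  rw [integral_sub_right_eq_self (fun y => kG d ε y) x]
  simp only [kG_eq]
  rw [integral_const_mul, GaussianFourier.integral_rexp_neg_mul_sq_norm (by positivity)]
  have h1 : π / (1 / (2 * ε ^ 2)) = 2 * π * ε ^ 2 := by field_simp
  rw [h1, finrank_euclideanSpace, Fintype.card_fin, neg_div,
    Real.rpow_neg (by positivity), inv_mul_cancel₀ (by positivity)]

lemma log_kG (hε : 0 < ε) (x : EuclideanSpace ℝ (Fin d)) :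
    Real.log (kG d ε x) =
      Real.log ((2 * π * ε ^ 2) ^ (-(d : ℝ) / 2)) - ‖x‖ ^ 2 / (2 * ε ^ 2) := by
  unfold kG
  rw [Real.log_mul (by positivity) (by positivity), Real.log_exp]
  ring

lemma QuadGrowth.integrable {F : Type*} [NormedAddCommGroup F] [NormedSpace ℝ F] (hε : 0 < ε)
    {f : EuclideanSpace ℝ (Fin d) → F} (hf : QuadGrowth f) (x : EuclideanSpace ℝ (Fin d)) :
    Integrable (fun y => kG d ε (y - x) • f y) := by
  have key : ∀ f : EuclideanSpace ℝ (Fin d) → F, QuadGrowth f →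
      Integrable (fun y => kG d ε y • f y) := by
    intro f hf
    obtain ⟨C, hC0, hC⟩ := hf.exists_nonneg
    set c : ℝ := (2 * π * ε ^ 2) ^ (-(d : ℝ) / 2) with hc
    have hc0 : 0 ≤ c := by positivity
    have hb : 0 < 1 / (4 * ε ^ 2) := by positivity
    refine ((integrable_exp_neg_mul_normSq hb).const_mul (c * (C * (1 + 4 * ε ^ 2)))).mono'
      ((kG_continuous.smul hf.1).aestronglyMeasurable) (Filter.Eventually.of_forall fun y => ?_)
    rw [norm_smul, Real.norm_of_nonneg (kG_pos hε y).le, kG_eq, ← hc]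
    set s : ℝ := ‖y‖ ^ 2 / (4 * ε ^ 2) with hs
    have hs0 : 0 ≤ s := by positivity
    have hy : ‖y‖ ^ 2 = 4 * ε ^ 2 * s := by rw [hs]; field_simp
    have e1 : -(1 / (2 * ε ^ 2)) * ‖y‖ ^ 2 = -s + -s := by rw [hy]; field_simp; ring
    have e2 : -(1 / (4 * ε ^ 2)) * ‖y‖ ^ 2 = -s := by rw [hy]; field_simp
    rw [e1, e2, Real.exp_add]
    -- the quadratic factor is absorbed by half of the Gaussian exponent, via `1 + s ≤ exp s`
    have h1 : (1 + s) * Real.exp (-s) ≤ 1 := by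
      have := mul_le_mul_of_nonneg_right (Real.add_one_le_exp s) (Real.exp_pos (-s)).le
      rw [← Real.exp_add, add_neg_cancel, Real.exp_zero] at this
      linarith
    have h2 : ‖f y‖ ≤ C * (1 + 4 * ε ^ 2) * (1 + s) := by
      refine (hC y).trans ?_
      rw [hy, mul_assoc C]
      refine mul_le_mul_of_nonneg_left ?_ hC0
      nlinarith [sq_nonneg ε]
    calc c * (Real.exp (-s) * Real.exp (-s)) * ‖f y‖
        ≤ c * (Real.exp (-s) * Real.exp (-s)) * (C * (1 + 4 * ε ^ 2) * (1 + s)) := by gcongr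
      _ = c * (C * (1 + 4 * ε ^ 2)) * Real.exp (-s) * ((1 + s) * Real.exp (-s)) := by ring
      _ ≤ c * (C * (1 + 4 * ε ^ 2)) * Real.exp (-s) * 1 := by gcongr
      _ = _ := by ring
  have := (key _ (hf.shift x)).comp_sub_right x
  simpa using this

lemma QuadGrowth.integrable_mul (hε : 0 < ε)
    {f : EuclideanSpace ℝ (Fin d) → ℝ} (hf : QuadGrowth f) (x : EuclideanSpace ℝ (Fin d)) :
    Integrable (fun y => kG d ε (y - x) * f y) := by
  simpa only [smul_eq_mul] using hf.integrable hε x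

lemma integrable_kG (hε : 0 < ε) (x : EuclideanSpace ℝ (Fin d)) :
    Integrable (fun y => kG d ε (y - x)) := by
  simpa using (QuadGrowth.const (d := d) (1 : ℝ)).integrable_mul hε x

lemma integral_kG_shift (f : EuclideanSpace ℝ (Fin d) → ℝ) (x u : EuclideanSpace ℝ (Fin d)) :
    ∫ y, kG d ε (y - (x + u)) * f y = ∫ y, kG d ε (y - x) * f (y + u) := by
  rw [← integral_sub_right_eq_self (fun y => kG d ε (y - x) * f (y + u)) u]
  refine integral_congr_ae (Filter.Eventually.of_forall fun y => ?_)
  simp only [sub_add_cancel]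
  congr 2
  abel

/-- The Gaussian kernel is centered. -/
lemma integral_kG_smul_sub (x : EuclideanSpace ℝ (Fin d)) :
    ∫ y, kG d ε (y - x) • (y - x) = 0 := by
  rw [integral_sub_right_eq_self (fun y => kG d ε y • y) x]
  have h1 := integral_neg_eq_self (fun y : EuclideanSpace ℝ (Fin d) => kG d ε y • y) volume
  have h2 : ∀ y : EuclideanSpace ℝ (Fin d), kG d ε (-y) • (-y) = -(kG d ε y • y) := by
    intro y; simp [kG]
  simp only [h2, integral_neg] at h1
  have h3 : (2 : ℝ) • ∫ y : EuclideanSpace ℝ (Fin d), kG d ε y • y = 0 := by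
    rw [two_smul]
    nth_rewrite 1 [← h1]
    exact neg_add_cancel _
  exact (smul_eq_zero.mp h3).resolve_left two_ne_zero

/-- The geometric mean of two Gaussian kernels is a multiple of the kernel at the midpoint; the
factor is their Bhattacharyya coefficient. -/
lemma kG_mul_kG (hε : 0 < ε) (y x u : EuclideanSpace ℝ (Fin d)) :
    kG d ε (y - (x + u)) * kG d ε (y - x) =
      (Real.exp (-(‖u‖ ^ 2 / (8 * ε ^ 2))) * kG d ε (y - (x + (1 / 2 : ℝ) • u))) ^ 2 := by
  have h1 : y - (x + u) = (y - (x + (1 / 2 : ℝ) • u)) - (1 / 2 : ℝ) • u := by module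
  have h2 : y - x = (y - (x + (1 / 2 : ℝ) • u)) + (1 / 2 : ℝ) • u := by module
  set z := y - (x + (1 / 2 : ℝ) • u)
  rw [h1, h2, kG, kG, kG, mul_pow, mul_pow, mul_mul_mul_comm, ← Real.exp_add, ← pow_two,
    ← Real.exp_nat_mul, ← Real.exp_nat_mul, mul_left_comm, ← Real.exp_add]
  congr 2
  rw [norm_sub_sq_real, norm_add_sq_real, norm_smul, inner_smul_right, mul_pow]
  norm_num
  field_simp
  ring

/-- Translating a Gaussian by `u` moves it by at most `‖u‖ / ε` in `L¹`, hence moves the mean of a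
function bounded by `B` by at most `B ‖u‖ / ε`. The `L¹` distance is controlled by the Hellinger
distance, which is explicit. -/
lemma integral_kG_shift_sub_le (hε : 0 < ε) {f : EuclideanSpace ℝ (Fin d) → ℝ}
    (hf : Continuous f) {B : ℝ} (hB : ∀ y, |f y| ≤ B) (x u : EuclideanSpace ℝ (Fin d)) :
    ∫ y, kG d ε (y - x) * f (y + u) ≤ (∫ y, kG d ε (y - x) * f y) + B * (‖u‖ / ε) := by
  have hB0 : 0 ≤ B := (abs_nonneg _).trans (hB 0)
  rcases eq_or_ne u 0 with rfl | hu
  · simp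
  have hu0 : 0 < ‖u‖ := norm_pos_iff.mpr hu
  have hq : QuadGrowth f := ⟨hf, B, fun y => (hB y).trans (by nlinarith [sq_nonneg ‖y‖])⟩
  rw [← integral_kG_shift]
  set t : ℝ := ‖u‖ / ε with ht
  have ht0 : 0 < t := by positivity
  set ρ : ℝ := Real.exp (-(‖u‖ ^ 2 / (8 * ε ^ 2))) with hρ
  have hρ0 : 0 < ρ := Real.exp_pos _
  have hρ1 : ρ ≤ 1 := Real.exp_le_one_iff.mpr (neg_nonpos.mpr (by positivity))
  have hρ2 : 1 - t ^ 2 / 8 ≤ ρ := by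
    have := Real.add_one_le_exp (-(‖u‖ ^ 2 / (8 * ε ^ 2)))
    have e : ‖u‖ ^ 2 / (8 * ε ^ 2) = t ^ 2 / 8 := by rw [ht]; field_simp
    rw [← hρ, e] at this
    linarith
  -- `lam` balances the two terms of the arithmetic-geometric mean inequality below
  set lam : ℝ := 4 / t with hlam
  have hlam0 : 0 < lam := by positivity
  set w := x + (1 / 2 : ℝ) • u
  have hpt : ∀ y, kG d ε (y - (x + u)) * f y - kG d ε (y - x) * f y ≤
      B * (lam / 2 * (kG d ε (y - (x + u)) + kG d ε (y - x) - 2 * (ρ * kG d ε (y - w))) +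
        1 / (2 * lam) * (kG d ε (y - (x + u)) + kG d ε (y - x) + 2 * (ρ * kG d ε (y - w)))) := by
    intro y
    have hm := kG_mul_kG hε y x u
    have hp := kG_pos hε (y - (x + u))
    have hp' := kG_pos hε (y - x)
    have hg : 0 < ρ * kG d ε (y - w) := mul_pos hρ0 (kG_pos hε _)
    rw [← hρ] at hm
    set p := kG d ε (y - (x + u))
    set q := kG d ε (y - x)
    set g := ρ * kG d ε (y - w)
    have hA : 0 ≤ p + q - 2 * g := by
      nlinarith [sq_nonneg (p - q), sq_nonneg (p + q - 2 * g)]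
    have hB' : 0 ≤ p + q + 2 * g := by positivity
    have habs : |p - q| ≤ lam / 2 * (p + q - 2 * g) + 1 / (2 * lam) * (p + q + 2 * g) := by
      refine abs_le_of_sq_le_sq ?_ (by positivity)
      have e : (p - q) ^ 2 = 4 * (lam / 2 * (p + q - 2 * g)) * (1 / (2 * lam) * (p + q + 2 * g)) := by
        field_simp
        nlinarith
      rw [e]
      nlinarith [sq_nonneg (lam / 2 * (p + q - 2 * g) - 1 / (2 * lam) * (p + q + 2 * g))]
    calc p * f y - q * f y = (p - q) * f y := by ring
      _ ≤ |p - q| * |f y| := by rw [← abs_mul]; exact le_abs_self _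
      _ ≤ |p - q| * B := by gcongr; exact hB y
      _ ≤ _ := by rw [mul_comm]; gcongr
  have i1 := integrable_kG hε (x + u)
  have i2 := integrable_kG hε x
  have i3 := integrable_kG hε w
  set α : ℝ := lam / 2 + 1 / (2 * lam) with hα
  set β : ℝ := ρ * (1 / lam - lam) with hβ
  have i4 : Integrable (fun y => α * (kG d ε (y - (x + u)) + kG d ε (y - x))) :=
    (i1.add i2).const_mul α
  have i5 : Integrable (fun y => β * kG d ε (y - w)) := i3.const_mul β
  have i6 : Integrable (fun y => B * (α * (kG d ε (y - (x + u)) + kG d ε (y - x)) +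
      β * kG d ε (y - w))) := (i4.add i5).const_mul B
  have hint : ∫ y, (kG d ε (y - (x + u)) * f y - kG d ε (y - x) * f y) ≤
      ∫ y, B * (α * (kG d ε (y - (x + u)) + kG d ε (y - x)) + β * kG d ε (y - w)) := by
    refine integral_mono ((hq.integrable_mul hε (x + u)).sub (hq.integrable_mul hε x)) i6
      fun y => (hpt y).trans_eq ?_
    rw [hα, hβ]
    field_simp
    ring
  rw [integral_sub (hq.integrable_mul hε (x + u)) (hq.integrable_mul hε x), integral_const_mul,
    integral_add i4 i5, integral_const_mul, integral_const_mul, integral_add i1 i2,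
    integral_kG hε, integral_kG hε, integral_kG hε] at hint
  have hfin : lam / 2 * (2 - 2 * ρ) + 1 / (2 * lam) * (2 + 2 * ρ) ≤ t := by
    calc lam / 2 * (2 - 2 * ρ) + 1 / (2 * lam) * (2 + 2 * ρ)
        ≤ lam / 2 * (t ^ 2 / 4) + 1 / (2 * lam) * 4 := by gcongr <;> linarith
      _ = t := by rw [hlam]; field_simp; ring
  have hfin' : α * (1 + 1) + β * 1 = lam / 2 * (2 - 2 * ρ) + 1 / (2 * lam) * (2 + 2 * ρ) := by
    rw [hα, hβ]
    field_simp
    ring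
  rw [hfin'] at hint
  linarith [mul_le_mul_of_nonneg_left hfin hB0]

end kernel

/-! ### The potential energy -/

section potential

variable {d : ℕ} {ε : ℝ} {V : EuclideanSpace ℝ (Fin d) → ℝ}
  {gradV : EuclideanSpace ℝ (Fin d) → EuclideanSpace ℝ (Fin d)} {L : ℝ}

/-- The quadratic upper bound for a function with `L`-Lipschitz gradient. -/
lemma le_add_inner_add_of_lipschitz_gradient (hV : ∀ x, HasGradientAt V (gradV x) x)
    (hL : ∀ x y, ‖gradV x - gradV y‖ ≤ L * ‖x - y‖) (x u : EuclideanSpace ℝ (Fin d)) :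
    V (x + u) ≤ V x + inner ℝ (gradV x) u + L / 2 * ‖u‖ ^ 2 := by
  set φ : ℝ → ℝ := fun t => V (x + t • u) - t * inner ℝ (gradV x) u - L / 2 * t ^ 2 * ‖u‖ ^ 2
  have hd : ∀ t, HasDerivAt φ
      (inner ℝ (gradV (x + t • u)) u - inner ℝ (gradV x) u - L * t * ‖u‖ ^ 2) t := by
    intro t
    have h1 : HasDerivAt (fun t : ℝ => x + t • u) u t := by
      simpa using ((hasDerivAt_id t).smul_const u).const_add x
    have h2 := (hV (x + t • u)).hasFDerivAt.comp_hasDerivAt t h1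
    have h3 := (h2.sub ((hasDerivAt_id t).mul_const (inner ℝ (gradV x) u))).sub
      ((((hasDerivAt_id t).pow 2).const_mul (L / 2)).mul_const (‖u‖ ^ 2))
    refine h3.congr_deriv ?_
    rw [InnerProductSpace.toDual_apply_apply]
    simp only [id]
    push_cast
    ring
  have hanti : AntitoneOn φ (Set.Icc 0 1) := by
    refine antitoneOn_of_deriv_nonpos (convex_Icc 0 1)
      (fun t _ => (hd t).continuousAt.continuousWithinAt)
      (fun t _ => (hd t).differentiableAt.differentiableWithinAt) fun t ht => ?_
    rw [interior_Icc] at ht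
    rw [(hd t).deriv, ← inner_sub_left]
    have h1 := real_inner_le_norm (gradV (x + t • u) - gradV x) u
    have h2 := hL (x + t • u) x
    rw [add_sub_cancel_left, norm_smul, Real.norm_of_nonneg ht.1.le] at h2
    nlinarith [mul_le_mul_of_nonneg_right h2 (norm_nonneg u)]
  have := hanti (Set.left_mem_Icc.mpr zero_le_one) (Set.right_mem_Icc.mpr zero_le_one) zero_le_one
  simp only [φ] at this
  simp at this
  linarith

lemma quadGrowth_potential (hV : ∀ x, HasGradientAt V (gradV x) x)
    (hL : ∀ x y, ‖gradV x - gradV y‖ ≤ L * ‖x - y‖) : QuadGrowth V := by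
  refine ⟨continuous_iff_continuousAt.mpr fun x => (hV x).hasFDerivAt.continuousAt,
    |V 0| + ‖gradV 0‖ + |L|, fun y => ?_⟩
  have h1 := le_add_inner_add_of_lipschitz_gradient hV hL 0 y
  have hV' : ∀ x, HasGradientAt (fun z => -V z) (-gradV x) x := fun x => by
    rw [hasGradientAt_iff_hasFDerivAt, map_neg]
    exact (hV x).hasFDerivAt.neg
  have h2 := le_add_inner_add_of_lipschitz_gradient hV'
    (fun x y => by rw [neg_sub_neg, norm_sub_rev]; exact hL x y) 0 y
  rw [zero_add] at h1 h2
  rw [inner_neg_left] at h2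
  have h3 := abs_le.mp (abs_real_inner_le_norm (gradV 0) y)
  have h4 := abs_le.mp (le_refl |V 0|)
  have h5 : L / 2 * ‖y‖ ^ 2 ≤ |L| * ‖y‖ ^ 2 := by
    have := le_abs_self L
    have := abs_nonneg L
    gcongr
    linarith
  have h6 : ‖gradV 0‖ * ‖y‖ ≤ ‖gradV 0‖ * (1 + ‖y‖ ^ 2) := by
    gcongr
    nlinarith [sq_nonneg (‖y‖ - 1), sq_nonneg ‖y‖]
  have h7 := abs_nonneg L
  have h8 := mul_nonneg (abs_nonneg (V 0)) (sq_nonneg ‖y‖)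
  have h9 := abs_nonneg (V 0)
  rw [Real.norm_eq_abs, abs_le]
  constructor <;> nlinarith

lemma quadGrowth_gradient (hL : ∀ x y, ‖gradV x - gradV y‖ ≤ L * ‖x - y‖) :
    QuadGrowth gradV := by
  refine ⟨(LipschitzWith.of_dist_le_mul (K := L.toNNReal) fun x y => ?_).continuous,
    ‖gradV 0‖ + |L|, fun y => ?_⟩
  · rw [dist_eq_norm, dist_eq_norm]
    refine (hL x y).trans ?_
    gcongr
    exact Real.le_coe_toNNReal L
  · have h1 := hL y 0
    rw [sub_zero] at h1
    have h2 := norm_le_insert' (gradV y) (gradV 0)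
    have h3 : L * ‖y‖ ≤ |L| * (1 + ‖y‖ ^ 2) := by
      have := le_abs_self L
      calc L * ‖y‖ ≤ |L| * ‖y‖ := by gcongr
        _ ≤ _ := by
          gcongr
          nlinarith [sq_nonneg (‖y‖ - 1), sq_nonneg ‖y‖]
    nlinarith [mul_nonneg (norm_nonneg (gradV 0)) (sq_nonneg ‖y‖)]

/-- The potential energy of one Gaussian component is `L`-smooth in its center. -/
lemma integral_kG_potential_le (hε : 0 < ε) (hV : ∀ x, HasGradientAt V (gradV x) x)
    (hL : ∀ x y, ‖gradV x - gradV y‖ ≤ L * ‖x - y‖) (x u : EuclideanSpace ℝ (Fin d)) :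
    ∫ y, kG d ε (y - (x + u)) * V y ≤ (∫ y, kG d ε (y - x) * V y) +
      inner ℝ (∫ y, kG d ε (y - x) • gradV y) u + L / 2 * ‖u‖ ^ 2 := by
  have hVq := quadGrowth_potential hV hL
  have hGq := quadGrowth_gradient hL
  have i1 := hVq.integrable_mul hε x
  have i2 := (hGq.inner_const u).integrable_mul hε x
  have i3 := (QuadGrowth.const (d := d) (L / 2 * ‖u‖ ^ 2)).integrable_mul hε x
  have i12 : Integrable (fun y => kG d ε (y - x) * V y +
    kG d ε (y - x) * inner ℝ (gradV y) u) := i1.add i2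
  have e2 : inner ℝ (∫ y, kG d ε (y - x) • gradV y) u =
      ∫ y, kG d ε (y - x) * inner ℝ (gradV y) u := by
    rw [real_inner_comm, ← integral_inner (hGq.integrable hε x)]
    simp only [inner_smul_right, real_inner_comm]
  have e3 : L / 2 * ‖u‖ ^ 2 = ∫ y, kG d ε (y - x) * (L / 2 * ‖u‖ ^ 2) := by
    rw [integral_mul_const, integral_kG hε, one_mul]
  rw [integral_kG_shift, e2, e3, ← integral_add i1 i2, ← integral_add i12 i3]
  refine integral_mono ((hVq.shift u).integrable_mul hε x) (i12.add i3) fun y => ?_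
  have := mul_le_mul_of_nonneg_left (le_add_inner_add_of_lipschitz_gradient hV hL y u)
    (kG_pos hε (y - x)).le
  simp only
  linarith

end potential

/-! ### The entropy of a Gaussian mixture -/

section mixture

variable {d n : ℕ} {ε : ℝ}

/-- The log-sum inequality, i.e. nonnegativity of the relative entropy on a finite set. -/
lemma log_sum_inequality {ι : Type*} [Fintype ι] [Nonempty ι] {a b : ι → ℝ} (ha : ∀ i, 0 < a i)
    (hb : ∀ i, 0 < b i) :
    (∑ i, b i) * (Real.log (∑ i, b i) - Real.log (∑ i, a i)) ≤
      ∑ i, b i * (Real.log (b i) - Real.log (a i)) := by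
  have hA : 0 < ∑ i, a i := Finset.sum_pos (fun i _ => ha i) Finset.univ_nonempty
  have hB : 0 < ∑ i, b i := Finset.sum_pos (fun i _ => hb i) Finset.univ_nonempty
  set A := ∑ i, a i
  set B := ∑ i, b i
  have key : ∀ i, b i * (Real.log B - Real.log A) + (b i - a i * (B / A)) ≤
      b i * (Real.log (b i) - Real.log (a i)) := by
    intro i
    have h1 := Real.log_le_sub_one_of_pos (x := a i / b i * (B / A))
      (mul_pos (div_pos (ha i) (hb i)) (div_pos hB hA))
    rw [Real.log_mul (div_pos (ha i) (hb i)).ne' (div_pos hB hA).ne',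
      Real.log_div (ha i).ne' (hb i).ne', Real.log_div hB.ne' hA.ne'] at h1
    have h2 := mul_le_mul_of_nonneg_left h1 (hb i).le
    have h3 : b i * (a i / b i * (B / A) - 1) = a i * (B / A) - b i := by
      have := (hb i).ne'
      field_simp
    linarith
  have h := Finset.sum_le_sum fun i (_ : i ∈ Finset.univ) => key i
  rw [Finset.sum_add_distrib, ← Finset.sum_mul, Finset.sum_sub_distrib, ← Finset.sum_mul] at h
  change B * _ + (B - A * (B / A)) ≤ _ at h
  rw [mul_div_cancel₀ B hA.ne'] at h
  linarith

/-- The unnormalized Gaussian mixture `∑ i, k_ε(y - X i)`. -/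
noncomputable def mixSum (d n : ℕ) (ε : ℝ) (X : Fin n → EuclideanSpace ℝ (Fin d))
    (y : EuclideanSpace ℝ (Fin d)) : ℝ :=
  ∑ i, kG d ε (y - X i)

/-- The posterior mean of the center, given that a sample of the mixture equals `y`. -/
noncomputable def postMean (d n : ℕ) (ε : ℝ) (X : Fin n → EuclideanSpace ℝ (Fin d))
    (y : EuclideanSpace ℝ (Fin d)) : EuclideanSpace ℝ (Fin d) :=
  (mixSum d n ε X y)⁻¹ • ∑ i, kG d ε (y - X i) • X i

variable {X : Fin n → EuclideanSpace ℝ (Fin d)}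

lemma mixSum_pos [NeZero n] (hε : 0 < ε) (y : EuclideanSpace ℝ (Fin d)) :
    0 < mixSum d n ε X y :=
  Finset.sum_pos (fun _ _ => kG_pos hε _) Finset.univ_nonempty

lemma mixSum_continuous : Continuous (mixSum d n ε X) := by
  unfold mixSum
  exact continuous_finsetSum _ fun i _ => kG_continuous.comp (by fun_prop)

lemma integrable_mixSum (hε : 0 < ε) : Integrable (mixSum d n ε X) :=
  integrable_finsetSum _ fun i _ => integrable_kG hε (X i)

lemma integral_mixSum (hε : 0 < ε) : ∫ y, mixSum d n ε X y = n := by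
  unfold mixSum
  rw [integral_finsetSum _ fun i _ => integrable_kG hε (X i)]
  simp [integral_kG hε]

lemma quadGrowth_log_mixSum [NeZero n] (hε : 0 < ε) :
    QuadGrowth (fun y => Real.log (mixSum d n ε X y)) := by
  refine ⟨mixSum_continuous.log fun y => (mixSum_pos hε y).ne', ?_⟩
  set c : ℝ := Real.log ((2 * π * ε ^ 2) ^ (-(d : ℝ) / 2)) with hc
  have hlow : ∀ y, c - ‖y - X 0‖ ^ 2 / (2 * ε ^ 2) ≤ Real.log (mixSum d n ε X y) := fun y => by
    rw [hc, ← log_kG hε]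
    exact Real.log_le_log (kG_pos hε _)
      (Finset.single_le_sum (f := fun i => kG d ε (y - X i)) (fun i _ => (kG_pos hε _).le)
        (Finset.mem_univ 0))
  have hup : ∀ y, Real.log (mixSum d n ε X y) ≤ Real.log n + c := fun y => by
    have hn : (n : ℝ) ≠ 0 := Nat.cast_ne_zero.mpr (NeZero.ne n)
    rw [hc, ← Real.log_mul hn (by positivity)]
    refine Real.log_le_log (mixSum_pos hε y) ?_
    have : ∀ i ∈ Finset.univ, kG d ε (y - X i) ≤ (2 * π * ε ^ 2) ^ (-(d : ℝ) / 2) := fun i _ => by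
      unfold kG
      refine mul_le_of_le_one_right (by positivity) (Real.exp_le_one_iff.mpr ?_)
      rw [neg_div]
      exact neg_nonpos.mpr (by positivity)
    simpa [mixSum] using Finset.sum_le_card_nsmul _ _ _ this
  obtain ⟨-, D, hD⟩ := (QuadGrowth.normSq (d := d)).shift (-X 0)
  refine ⟨|c| + |Real.log n + c| + D / (2 * ε ^ 2), fun y => ?_⟩
  have h1 := hD y
  rw [Real.norm_of_nonneg (by positivity)] at h1
  simp only [← sub_eq_add_neg] at h1
  have h2 : ‖y - X 0‖ ^ 2 / (2 * ε ^ 2) ≤ D / (2 * ε ^ 2) * (1 + ‖y‖ ^ 2) := by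
    rw [div_mul_eq_mul_div]
    gcongr
  have h2' : 0 ≤ ‖y - X 0‖ ^ 2 / (2 * ε ^ 2) := by positivity
  have h3 := abs_le.mp (le_refl |c|)
  have h4 := abs_le.mp (le_refl |Real.log n + c|)
  have h5 := mul_nonneg (abs_nonneg c) (sq_nonneg ‖y‖)
  have h6 := mul_nonneg (abs_nonneg (Real.log n + c)) (sq_nonneg ‖y‖)
  have h7 := abs_nonneg c
  have h8 := abs_nonneg (Real.log n + c)
  rw [Real.norm_eq_abs, abs_le]
  constructor <;> linarith [hlow y, hup y]

lemma postMean_continuous [NeZero n] (hε : 0 < ε) : Continuous (postMean d n ε X) := by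
  unfold postMean
  refine (mixSum_continuous.inv₀ fun y => (mixSum_pos hε y).ne').smul ?_
  exact continuous_finsetSum _ fun i _ => (kG_continuous.comp (by fun_prop)).smul continuous_const

lemma mixSum_smul_postMean [NeZero n] (hε : 0 < ε) (y : EuclideanSpace ℝ (Fin d)) :
    mixSum d n ε X y • postMean d n ε X y = ∑ i, kG d ε (y - X i) • X i := by
  rw [postMean, smul_inv_smul₀ (mixSum_pos hε y).ne']

lemma norm_postMean_le [NeZero n] (hε : 0 < ε) {R : ℝ} (hR : ∀ i, ‖X i‖ ≤ R)
    (y : EuclideanSpace ℝ (Fin d)) : ‖postMean d n ε X y‖ ≤ R := by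
  have hS := mixSum_pos (X := X) hε y
  rw [postMean, norm_smul, norm_inv, Real.norm_of_nonneg hS.le, inv_mul_le_iff₀ hS, mixSum,
    Finset.sum_mul]
  refine (norm_sum_le _ _).trans (Finset.sum_le_sum fun i _ => ?_)
  rw [norm_smul, Real.norm_of_nonneg (kG_pos hε _).le]
  exact mul_le_mul_of_nonneg_left (hR i) (kG_pos hε _).le

lemma quadGrowth_postMean [NeZero n] (hε : 0 < ε) : QuadGrowth (postMean d n ε X) := by
  refine ⟨postMean_continuous hε, ∑ i, ‖X i‖, fun y => ?_⟩
  have h1 := norm_postMean_le (X := X) hε (R := ∑ i, ‖X i‖)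
    (fun i => Finset.single_le_sum (f := fun i => ‖X i‖) (fun _ _ => norm_nonneg _)
      (Finset.mem_univ i)) y
  have h2 : 0 ≤ ∑ i, ‖X i‖ := Finset.sum_nonneg fun _ _ => norm_nonneg _
  nlinarith [mul_nonneg h2 (sq_nonneg ‖y‖)]

/-- Since `log (mixSum X) + ‖·‖² / (2ε²)` is a log-sum-exp of affine functions, it is convex, with
gradient `postMean X / ε²`. This is the gradient inequality at `y + u`; subtracting the quadratic
part leaves precisely the squared distances to the center `c`. -/
lemma log_mixSum_add_le [NeZero n] (hε : 0 < ε) (y u c : EuclideanSpace ℝ (Fin d)) :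
    Real.log (mixSum d n ε X (y + u)) + (‖y + u - c‖ ^ 2 - ‖y - c‖ ^ 2) / (2 * ε ^ 2) ≤
      Real.log (mixSum d n ε X y) + inner ℝ (postMean d n ε X (y + u) - c) u / ε ^ 2 := by
  have hS := mixSum_pos (X := X) hε (y + u)
  have h1 := log_sum_inequality (a := fun i => kG d ε (y - X i))
    (b := fun i => kG d ε (y + u - X i)) (fun i => kG_pos hε _) (fun i => kG_pos hε _)
  change mixSum d n ε X (y + u) * (Real.log (mixSum d n ε X (y + u)) -
    Real.log (mixSum d n ε X y)) ≤ _ at h1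
  have h2 : ∀ i, kG d ε (y + u - X i) * (Real.log (kG d ε (y + u - X i)) -
      Real.log (kG d ε (y - X i))) =
      inner ℝ (kG d ε (y + u - X i) • X i) u / ε ^ 2 -
        kG d ε (y + u - X i) * ((2 * inner ℝ y u + ‖u‖ ^ 2) / (2 * ε ^ 2)) := by
    intro i
    rw [log_kG hε, log_kG hε, inner_smul_left, add_sub_right_comm, norm_add_sq_real,
      inner_sub_left]
    simp only [conj_trivial]
    field_simp
    ring
  simp only [h2] at h1
  rw [Finset.sum_sub_distrib, ← Finset.sum_div, ← sum_inner, ← mixSum_smul_postMean hε,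
    ← Finset.sum_mul, inner_smul_left] at h1
  change _ ≤ mixSum d n ε X (y + u) * _ / _ - mixSum d n ε X (y + u) * _ at h1
  rw [mul_div_assoc, ← mul_sub] at h1
  have h3 := le_of_mul_le_mul_left h1 hS
  rw [add_sub_right_comm, norm_add_sq_real, inner_sub_left, inner_sub_left]
  have e : (‖y - c‖ ^ 2 + 2 * (inner ℝ y u - inner ℝ c u) + ‖u‖ ^ 2 - ‖y - c‖ ^ 2) / (2 * ε ^ 2) =
      (2 * inner ℝ y u + ‖u‖ ^ 2) / (2 * ε ^ 2) - inner ℝ c u / ε ^ 2 := by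
    field_simp
    ring
  rw [e, sub_div]
  linarith

lemma integral_mixSum_mul [NeZero n] (hε : 0 < ε) {f : EuclideanSpace ℝ (Fin d) → ℝ}
    (hf : QuadGrowth f) :
    ∫ y, mixSum d n ε X y * f y = ∑ j, ∫ y, kG d ε (y - X j) * f y := by
  rw [← integral_finsetSum _ fun j _ => hf.integrable_mul hε (X j)]
  simp only [mixSum, Finset.sum_mul]

lemma integrable_mixSum_mul (hε : 0 < ε) {f : EuclideanSpace ℝ (Fin d) → ℝ}
    (hf : QuadGrowth f) : Integrable (fun y => mixSum d n ε X y * f y) := by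
  simp only [mixSum, Finset.sum_mul]
  exact integrable_finsetSum _ fun j _ => hf.integrable_mul hε (X j)

/-- Majorization of the negative entropy at displaced centers: the new posterior weights are
replaced by those of the old mixture (log-sum inequality), after which each component contributes
the mean of an explicit function of the old mixture. -/
lemma integral_mixSum_log_le [NeZero n] (hε : 0 < ε) (u : Fin n → EuclideanSpace ℝ (Fin d)) :
    ∫ y, mixSum d n ε (fun j => X j + u j) y * Real.log (mixSum d n ε (fun j => X j + u j) y) ≤
      (∫ y, mixSum d n ε X y * Real.log (mixSum d n ε X y)) +
        ∑ j, ∫ y, kG d ε (y - X j) * (inner ℝ (postMean d n ε X (y + u j) - X j) (u j) / ε ^ 2) := by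
  set X' : Fin n → EuclideanSpace ℝ (Fin d) := fun j => X j + u j with hX'
  have hl := quadGrowth_log_mixSum (X := X) hε
  have hq : ∀ j, QuadGrowth (fun y => Real.log (mixSum d n ε X y) +
      (2 * ε ^ 2)⁻¹ * (‖y + -X j‖ ^ 2 - ‖y + -X' j‖ ^ 2)) := fun j =>
    hl.add (((QuadGrowth.normSq.shift (-X j)).sub (QuadGrowth.normSq.shift (-X' j))).const_mul _)
  have hm : ∀ j, QuadGrowth (fun y =>
      inner ℝ (postMean d n ε X (y + u j) - X j) (u j) / ε ^ 2) := fun j => by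
    simp only [div_eq_inv_mul]
    exact ((((quadGrowth_postMean hε).shift (u j)).sub (.const (X j))).inner_const (u j)).const_mul _
  rw [integral_mixSum_mul hε hl, ← Finset.sum_add_distrib]
  calc ∫ y, mixSum d n ε X' y * Real.log (mixSum d n ε X' y)
      ≤ ∫ y, ∑ j, kG d ε (y - X' j) * (Real.log (mixSum d n ε X y) +
          (2 * ε ^ 2)⁻¹ * (‖y + -X j‖ ^ 2 - ‖y + -X' j‖ ^ 2)) := by
        refine integral_mono (integrable_mixSum_mul hε (quadGrowth_log_mixSum hε))
          (integrable_finsetSum _ fun j _ => (hq j).integrable_mul hε (X' j)) fun y => ?_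
        have h1 := log_sum_inequality (a := fun i => kG d ε (y - X i))
          (b := fun i => kG d ε (y - X' i)) (fun i => kG_pos hε _) (fun i => kG_pos hε _)
        change mixSum d n ε X' y * (Real.log (mixSum d n ε X' y) -
          Real.log (mixSum d n ε X y)) ≤ _ at h1
        simp only [log_kG hε] at h1
        simp only [mul_add, Finset.sum_add_distrib, ← Finset.sum_mul, ← sub_eq_add_neg]
        change _ ≤ mixSum d n ε X' y * _ + _
        rw [mul_sub] at h1
        refine (sub_le_iff_le_add'.mp h1).trans_eq ?_
        congr 1
        refine Finset.sum_congr rfl fun j _ => ?_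
        ring
    _ = ∑ j, ∫ y, kG d ε (y - X' j) * (Real.log (mixSum d n ε X y) +
          (2 * ε ^ 2)⁻¹ * (‖y + -X j‖ ^ 2 - ‖y + -X' j‖ ^ 2)) :=
        integral_finsetSum _ fun j _ => (hq j).integrable_mul hε (X' j)
    _ ≤ _ := by
        refine Finset.sum_le_sum fun j _ => ?_
        have i1 := hl.integrable_mul hε (X j)
        have i2 := (hm j).integrable_mul hε (X j)
        rw [hX', integral_kG_shift, ← integral_add i1 i2]
        refine integral_mono (((hq j).shift (u j)).integrable_mul hε (X j)) (i1.add i2) fun y => ?_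
        have h1 := log_mixSum_add_le (X := X) hε y (u j) (X j)
        have h2 : y + u j + -(X j + u j) = y - X j := by abel
        simp only [h2, ← sub_eq_add_neg, ← mul_add]
        refine mul_le_mul_of_nonneg_left (le_of_eq_of_le ?_ h1) (kG_pos hε _).le
        rw [div_eq_inv_mul]

/-- The inner product of the entropic part of the particle gradient with a displacement. The
Gaussian being centered, `y` may be replaced by the center `X j`. -/
lemma inner_entropyGrad [NeZero n] (hε : 0 < ε) (j : Fin n) (u : EuclideanSpace ℝ (Fin d)) :
    inner ℝ (∫ y, ((∑ i, kG d ε (y - X i))⁻¹ * kG d ε (y - X j)) •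
        (∑ i, nablaKG d ε (y - X i))) u =
      ∫ y, kG d ε (y - X j) * (inner ℝ (postMean d n ε X y - X j) u / ε ^ 2) := by
  have hm : QuadGrowth (fun y => postMean d n ε X y - X j) :=
    (quadGrowth_postMean hε).sub (.const (X j))
  have i1 := hm.integrable hε (X j)
  have i2 := (QuadGrowth.id.sub (.const (X j))).integrable hε (X j)
  have h1 : ∀ y, ((∑ i, kG d ε (y - X i))⁻¹ * kG d ε (y - X j)) •
      (∑ i, nablaKG d ε (y - X i)) =
      (1 / ε ^ 2) • (kG d ε (y - X j) • (postMean d n ε X y - X j) -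
        kG d ε (y - X j) • (y - X j)) := by
    intro y
    have hS := mixSum_pos (X := X) hε y
    have e1 : ∑ i, nablaKG d ε (y - X i) =
        (1 / ε ^ 2) • (mixSum d n ε X y • (postMean d n ε X y - y)) := by
      rw [smul_sub, mixSum_smul_postMean hε, mixSum, Finset.sum_smul, ← Finset.sum_sub_distrib,
        Finset.smul_sum]
      refine Finset.sum_congr rfl fun i _ => ?_
      rw [nablaKG]
      module
    rw [e1]
    change ((mixSum d n ε X y)⁻¹ * _) • _ = _
    rw [smul_comm, mul_comm, mul_smul, inv_smul_smul₀ hS.ne', ← smul_sub, sub_sub_sub_cancel_right]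
  simp only [h1]
  rw [integral_smul, integral_sub i1 i2, integral_kG_smul_sub, sub_zero, inner_smul_left,
    real_inner_comm, ← integral_inner i1, ← integral_const_mul]
  refine integral_congr_ae (Filter.Eventually.of_forall fun y => ?_)
  simp only [conj_trivial, inner_smul_right, real_inner_comm u]
  ring

lemma mollF_eq [NeZero n] (hε : 0 < ε) {V : EuclideanSpace ℝ (Fin d) → ℝ} (hV : QuadGrowth V) :
    mollF d n ε V X = (1 / n : ℝ) * ((∑ j, ∫ y, kG d ε (y - X j) * V y) +
      ∫ y, mixSum d n ε X y * Real.log (mixSum d n ε X y)) - Real.log n := by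
  have hn : (n : ℝ) ≠ 0 := Nat.cast_ne_zero.mpr (NeZero.ne n)
  have hq : ∀ y, qMix d n ε X y = (1 / n : ℝ) * mixSum d n ε X y := fun y => rfl
  have h1 : ∀ y, V y * qMix d n ε X y = (1 / n : ℝ) * (mixSum d n ε X y * V y) := fun y => by
    rw [hq]; ring
  have h2 : ∀ y, qMix d n ε X y * Real.log (qMix d n ε X y) =
      (1 / n : ℝ) * (mixSum d n ε X y * Real.log (mixSum d n ε X y) -
        mixSum d n ε X y * Real.log n) := fun y => by
    rw [hq, Real.log_mul (one_div_ne_zero hn) (mixSum_pos hε y).ne', one_div, Real.log_inv]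
    ring
  unfold mollF
  simp only [h1, h2]
  rw [integral_const_mul, integral_const_mul, integral_mixSum_mul hε hV,
    integral_sub (integrable_mixSum_mul hε (quadGrowth_log_mixSum hε))
      ((integrable_mixSum hε).mul_const _), integral_mul_const, integral_mixSum hε]
  field_simp
  ring

/-- The Gibbs inequality: `mollF` is the relative entropy of the mixture with respect to `exp (-V)`. -/
lemma mollF_nonneg [NeZero n] (hε : 0 < ε) {V : EuclideanSpace ℝ (Fin d) → ℝ} (hV : QuadGrowth V)
    (hnorm : (∫ x, Real.exp (-V x)) = 1) : 0 ≤ mollF d n ε V X := by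
  have hn : (0 : ℝ) < n := Nat.cast_pos.mpr (NeZero.pos n)
  have hexp : Integrable (fun x => Real.exp (-V x)) :=
    Integrable.of_integral_ne_zero (by rw [hnorm]; exact one_ne_zero)
  have hl := quadGrowth_log_mixSum (X := X) hε
  have hq := ((hV.add hl).sub (.const (Real.log n)))
  have h1 : ∀ y, mixSum d n ε X y - n * Real.exp (-V y) ≤
      mixSum d n ε X y * (V y + Real.log (mixSum d n ε X y) - Real.log n) := by
    intro y
    have hS := mixSum_pos (X := X) hε y
    have h2 := Real.log_le_sub_one_of_pos (x := n * Real.exp (-V y) / mixSum d n ε X y)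
      (by positivity)
    rw [Real.log_div (by positivity) hS.ne', Real.log_mul hn.ne' (by positivity),
      Real.log_exp] at h2
    have h3 := mul_le_mul_of_nonneg_left h2 hS.le
    rw [mul_sub (mixSum d n ε X y) (_ / _), mul_div_cancel₀ _ hS.ne'] at h3
    linarith
  have h2 := integral_mono ((integrable_mixSum hε).sub (hexp.const_mul (n : ℝ)))
    (integrable_mixSum_mul hε hq) h1
  have e1 : ∫ y, (mixSum d n ε X y - n * Real.exp (-V y)) = 0 := by
    rw [integral_sub (integrable_mixSum hε) (hexp.const_mul (n : ℝ)), integral_mixSum hε,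
      integral_const_mul, hnorm]
    ring
  have j1 := integrable_mixSum_mul (X := X) hε hV
  have j2 := integrable_mixSum_mul (X := X) hε hl
  have j3 := (integrable_mixSum (X := X) hε).mul_const (Real.log n)
  have e2 : ∫ y, mixSum d n ε X y * (V y + Real.log (mixSum d n ε X y) - Real.log n) =
      (∑ j, ∫ y, kG d ε (y - X j) * V y) +
      (∫ y, mixSum d n ε X y * Real.log (mixSum d n ε X y)) - n * Real.log n := by
    simp only [mul_sub, mul_add]
    have j12 : Integrable (fun y => mixSum d n ε X y * V y +
      mixSum d n ε X y * Real.log (mixSum d n ε X y)) := j1.add j2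
    rw [integral_sub j12 j3, integral_add j1 j2, integral_mixSum_mul hε hV, integral_mul_const,
      integral_mixSum hε]
  have h3 : (0 : ℝ) ≤ ∫ y, mixSum d n ε X y *
      (V y + Real.log (mixSum d n ε X y) - Real.log n) := e1.symm.le.trans h2
  rw [e2] at h3
  rw [mollF_eq hε hV]
  have h4 : (1 / n : ℝ) * (n * Real.log n) = Real.log n := by field_simp
  have h5 := mul_nonneg (one_div_pos.mpr hn).le h3
  rw [mul_sub, h4] at h5
  exact h5

/-- The descent lemma. Only the base point `X` has to be bounded: the displaced configuration
enters through the majorization of the entropy, which involves the posterior mean of `X` alone. -/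
lemma mollF_add_le [NeZero n] (hε : 0 < ε) {V : EuclideanSpace ℝ (Fin d) → ℝ}
    {gradV : EuclideanSpace ℝ (Fin d) → EuclideanSpace ℝ (Fin d)} {L R : ℝ}
    (hV : ∀ x, HasGradientAt V (gradV x) x)
    (hL : ∀ x y, ‖gradV x - gradV y‖ ≤ L * ‖x - y‖) (hR : ∀ i, ‖X i‖ ≤ R)
    (u : Fin n → EuclideanSpace ℝ (Fin d)) :
    mollF d n ε V (fun j => X j + u j) ≤ mollF d n ε V X +
      (1 / n : ℝ) * ∑ j, (inner ℝ (particleGrad d n ε gradV X j) (u j) +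
        (L / 2 + R / ε ^ 3) * ‖u j‖ ^ 2) := by
  have hVq := quadGrowth_potential hV hL
  rw [mollF_eq hε hVq, mollF_eq hε hVq, sub_add_eq_add_sub, ← mul_add]
  refine sub_le_sub_right (mul_le_mul_of_nonneg_left ?_ (by positivity)) _
  have hpot := Finset.sum_le_sum fun j (_ : j ∈ Finset.univ) =>
    integral_kG_potential_le hε hV hL (X j) (u j)
  have hent := integral_mixSum_log_le (X := X) hε u
  have hshift : ∀ j ∈ Finset.univ,
      ∫ y, kG d ε (y - X j) * (inner ℝ (postMean d n ε X (y + u j) - X j) (u j) / ε ^ 2) ≤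
      inner ℝ (∫ y, ((∑ i, kG d ε (y - X i))⁻¹ * kG d ε (y - X j)) •
        (∑ i, nablaKG d ε (y - X i))) (u j) + R / ε ^ 3 * ‖u j‖ ^ 2 := by
    intro j _
    rw [inner_entropyGrad hε]
    -- the constant `X j` is split off, so that the bound involves only `‖postMean‖ ≤ R`
    have hb : ∀ y, |inner ℝ (postMean d n ε X y) (u j) / ε ^ 2| ≤ R * ‖u j‖ / ε ^ 2 := fun y => by
      rw [abs_div, abs_of_pos (by positivity : 0 < ε ^ 2)]
      gcongr
      exact (abs_real_inner_le_norm _ _).trans (by gcongr; exact norm_postMean_le hε hR y)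
    have hcont : Continuous fun y => inner ℝ (postMean d n ε X y) (u j) / ε ^ 2 := by
      have := postMean_continuous (X := X) hε
      fun_prop
    have h1 := integral_kG_shift_sub_le hε hcont hb (X j) (u j)
    have hq : QuadGrowth fun y => inner ℝ (postMean d n ε X y) (u j) / ε ^ 2 := by
      simp only [div_eq_inv_mul]
      exact ((quadGrowth_postMean hε).inner_const (u j)).const_mul _
    have hc := (integrable_kG hε (X j)).mul_const (inner ℝ (X j) (u j) / ε ^ 2)
    simp only [inner_sub_left, sub_div, mul_sub]
    rw [integral_sub ((hq.shift (u j)).integrable_mul hε (X j)) hc,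
      integral_sub (hq.integrable_mul hε (X j)) hc]
    have e : R * ‖u j‖ / ε ^ 2 * (‖u j‖ / ε) = R / ε ^ 3 * ‖u j‖ ^ 2 := by field_simp
    linarith
  have hs := Finset.sum_le_sum hshift
  simp only [particleGrad, inner_add_left, add_mul, Finset.sum_add_distrib] at hpot hs ⊢
  linarith

end mixture

/-! ### Summing the descent inequality -/

/-- Corollary 3.4, average gradient rate: along gradient descent iterates
with bounded second moments, the average squared gradient norm over the first `T`
iterations is at most `F(X₀)/(c_γ T)`. -/
theorem stmt_8 (d : ℕ) (hd : 1 ≤ d) (ε : ℝ) (hε : 0 < ε) (n : ℕ) (hn : 1 ≤ n)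
    (V : EuclideanSpace ℝ (Fin d) → ℝ)
    (gradV : EuclideanSpace ℝ (Fin d) → EuclideanSpace ℝ (Fin d))
    (hV : ∀ x, HasGradientAt V (gradV x) x)
    (L : ℝ) (hL : ∀ x y, ‖gradV x - gradV y‖ ≤ L * ‖x - y‖)
    (hnorm : (∫ x, Real.exp (-V x)) = 1)
    (h : ℝ) (hh : 0 < h)
    (M : ℝ)
    (hM : M = L + (1 / ε ^ 2 + 3 * Real.sqrt (h * n) / ε ^ 3 + Real.sqrt n / ε ^ 2 +
      n * Real.sqrt h / ε ^ 3))
    (γ : ℝ) (hγ0 : 0 < γ) (hγM : γ < 2 / M)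
    (cγ : ℝ) (hcγ : cγ = γ * (1 - γ * M / 2))
    (X : ℕ → Fin n → EuclideanSpace ℝ (Fin d))
    (hiter : ∀ l j, X (l + 1) j = X l j - γ • particleGrad d n ε gradV (X l) j)
    (T : ℕ) (hT : 1 ≤ T)
    (hmom : ∀ l < T, (1 / n : ℝ) * ∑ j, ‖X l j‖ ^ 2 ≤ h) :
    (1 / T : ℝ) * ∑ l ∈ Finset.range T,
        (1 / n : ℝ) * ∑ j, ‖particleGrad d n ε gradV (X l) j‖ ^ 2 ≤
      mollF d n ε V (X 0) / (cγ * T) := by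
  have : NeZero n := ⟨by omega⟩
  have hn0 : (0 : ℝ) < n := by exact_mod_cast hn
  have hT0 : (0 : ℝ) < T := by exact_mod_cast hT
  -- `0 ≤ L` because the space is nontrivial
  have hL0 : 0 ≤ L := by
    let e : EuclideanSpace ℝ (Fin d) := EuclideanSpace.single ⟨0, hd⟩ 1
    have h1 : 0 ≤ L * ‖e - 0‖ := (norm_nonneg _).trans (hL e 0)
    simpa [e] using h1
  have hM0 : 0 < M := by rw [hM]; positivity
  have hc0 : 0 < cγ := by
    have h1 := (lt_div_iff₀ hM0).mp hγM
    rw [hcγ]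
    exact mul_pos hγ0 (by linarith)
  set D : ℕ → ℝ := fun l => (1 / n : ℝ) * ∑ j, ‖particleGrad d n ε gradV (X l) j‖ ^ 2 with hD
  have hstep : ∀ l < T, cγ * D l ≤ mollF d n ε V (X l) - mollF d n ε V (X (l + 1)) := by
    intro l hl
    have hR : ∀ i, ‖X l i‖ ≤ Real.sqrt (h * n) := fun i => by
      refine Real.le_sqrt_of_sq_le ?_
      have h1 := hmom l hl
      rw [one_div, inv_mul_le_iff₀ hn0, mul_comm] at h1
      exact (Finset.single_le_sum (f := fun j => ‖X l j‖ ^ 2) (fun _ _ => by positivity)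
        (Finset.mem_univ i)).trans h1
    have hX : X (l + 1) = fun j => X l j + (-γ) • particleGrad d n ε gradV (X l) j := by
      funext j
      rw [hiter, neg_smul, sub_eq_add_neg]
    have h1 := mollF_add_le hε hV hL hR (fun j => (-γ) • particleGrad d n ε gradV (X l) j)
    rw [← hX] at h1
    have hcoef : L / 2 + Real.sqrt (h * n) / ε ^ 3 ≤ M / 2 := by
      have e1 : 0 ≤ Real.sqrt (h * n) / ε ^ 3 := by positivity
      have e2 : 0 ≤ 1 / ε ^ 2 + Real.sqrt n / ε ^ 2 + n * Real.sqrt h / ε ^ 3 := by positivity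
      rw [hM, mul_div_assoc 3]
      linarith
    have h2 : (1 / n : ℝ) * ∑ j, (inner ℝ (particleGrad d n ε gradV (X l) j)
          ((-γ) • particleGrad d n ε gradV (X l) j) +
        (L / 2 + Real.sqrt (h * n) / ε ^ 3) * ‖(-γ) • particleGrad d n ε gradV (X l) j‖ ^ 2) ≤
        -cγ * D l := by
      rw [hD, mul_left_comm, Finset.mul_sum _ _ (-cγ)]
      refine mul_le_mul_of_nonneg_left (Finset.sum_le_sum fun j _ => ?_) (by positivity)
      rw [inner_smul_right, real_inner_self_eq_norm_sq, norm_smul, mul_pow, norm_neg,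
        Real.norm_of_nonneg hγ0.le, hcγ]
      have := mul_le_mul_of_nonneg_right hcoef
        (by positivity : 0 ≤ γ ^ 2 * ‖particleGrad d n ε gradV (X l) j‖ ^ 2)
      linarith
    linarith
  have hsum := Finset.sum_le_sum fun l (hl : l ∈ Finset.range T) =>
    hstep l (Finset.mem_range.mp hl)
  rw [Finset.sum_range_sub' (fun l => mollF d n ε V (X l)), ← Finset.mul_sum] at hsum
  have hF := mollF_nonneg (X := X T) hε (quadGrowth_potential hV hL) hnorm
  rw [le_div_iff₀ (mul_pos hc0 hT0)]
  calc (1 / T : ℝ) * (∑ l ∈ Finset.range T, D l) * (cγ * T)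
      = cγ * ∑ l ∈ Finset.range T, D l := by field_simp
    _ ≤ _ := by linarith
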